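/- arXiv:1812.04490 — 2 statements merged into one kernel-verified Lean document; each statement's English description precedes it below -/
import Mathlib

section
/- For all nonnegative integers a_1, a_2, a_3, the constant term c_3(⟨a_1, a_2, a_3⟩; ⟨−1, 0, 1⟩) satisfies (1 + a_2 + a_3) · a_1! a_2! a_3! · c_3(⟨a_1, a_2, a_3⟩; ⟨−1, 0, 1⟩) = −a_1 · (a_1 + a_2 + a_3)!. -/
/-- The polynomial `∏_{1 ≤ i ≠ j ≤ n} (x_j - x_i)^{a_j}` over `ℤ`. -/
noncomputable def dysonPoly (n : ℕ) (a : Fin n → ℕ) : MvPolynomial (Fin n) ℤ :=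
  ∏ j : Fin n, ∏ i ∈ Finset.univ.erase j, (MvPolynomial.X j - MvPolynomial.X i) ^ a j

/-- The constant term `c_n(a; b)` of the Laurent polynomial
`F_n(x; a; b) = ∏_h x_h^{-b_h} ∏_{1 ≤ i ≠ j ≤ n} (1 - x_i/x_j)^{a_j}`, i.e. the
coefficient of `∏_j x_j^{(n-1)a_j + b_j}` in `∏_{1 ≤ i ≠ j ≤ n} (x_j - x_i)^{a_j}`,
taken to be `0` if some exponent `(n-1)a_j + b_j` is negative. -/
noncomputable def dysonCT (n : ℕ) (a : Fin n → ℕ) (b : Fin n → ℤ) : ℤ :=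
  if ∀ j, 0 ≤ ((n : ℤ) - 1) * a j + b j then
    MvPolynomial.coeff
      (Finsupp.equivFunOnFinite.symm fun j => (((n : ℤ) - 1) * a j + b j).toNat)
      (dysonPoly n a)
  else 0

/-!
The argument is Good's. Lagrange interpolation gives
`∑ j, x_j ^ (n - 1) / ∏ i ≠ j, (x_j - x_i) = 1`, which yields the recursion
`c_n(a; b) = ∑ j, c_n(a - e_j; b)` whenever all `a_j` are positive. If instead `a_k = 0`, then `F_n`
is a polynomial in `x_k` times `x_k ^ (-b_k)`, so that extracting the coefficient of `x_k ^ b_k`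
leaves constant terms in the other `n - 1` variables: for `b_k = 0` the single term with index `k`
removed, for `b_k = 1` the combination `-∑ j, a_j c_{n-1}(a; b + e_j)`; for `b_k < 0` nothing is
left. For `b = 0` these rules determine `c_n(a; 0)`, which is Dyson's multinomial coefficient. For
`b = e_q - e_p` with `p ≠ q` they are also satisfied by
`-a_p (∑ a_i)! / ((1 + ∑ i ≠ p, a_i) ∏ a_i!)`, the case `a_q = 0` using Dyson's value for
`c_{n-1}(a; 0)`. The theorem is the case `n = 3`, `p = 1`, `q = 3`.
-/

open Finset MvPolynomial

section SubSingle

variable {ι : Type*} [DecidableEq ι] {a : ι → ℕ} {j : ι}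

theorem sub_single_one_add_single_one (ha : a j ≠ 0) :
    a - Pi.single j 1 + Pi.single j 1 = a := by
  ext i
  rcases eq_or_ne i j with rfl | hij
  · simp [Nat.sub_add_cancel (Nat.one_le_iff_ne_zero.mpr ha)]
  · simp [hij]

theorem natCast_sub_single_one_apply (ha : a j ≠ 0) (i : ι) :
    (((a - Pi.single j 1 : ι → ℕ) i : ℕ) : ℤ) = a i - (Pi.single j 1 : ι → ℤ) i := by
  rcases eq_or_ne i j with rfl | hij
  · simp [Nat.one_le_iff_ne_zero.mpr ha]
  · simp [hij]

end SubSingle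

section IntCoeff

variable {σ R : Type*} [Finite σ] [CommSemiring R]

open Classical in
/-- The coefficient of the Laurent monomial `x ^ m` in a polynomial. Allowing negative exponents
(where the coefficient is `0`) matches the convention of `dysonCT` and makes division of the
monomial by powers of the variables total. -/
noncomputable def intCoeff (m : σ → ℤ) : MvPolynomial σ R →ₗ[R] R :=
  if 0 ≤ m then lcoeff R (Finsupp.equivFunOnFinite.symm fun i => (m i).toNat) else 0

theorem intCoeff_natCast (m : σ →₀ ℕ) (p : MvPolynomial σ R) :
    intCoeff (fun i => (m i : ℤ)) p = coeff m p := by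
  have hm : (0 : σ → ℤ) ≤ fun i => (m i : ℤ) := fun i => Int.natCast_nonneg _
  simp [intCoeff, hm]

theorem intCoeff_of_neg {m : σ → ℤ} {i : σ} (h : m i < 0) (p : MvPolynomial σ R) :
    intCoeff m p = 0 := by
  have hm : ¬ 0 ≤ m := fun hm => (hm i).not_gt h
  simp [intCoeff, hm]

theorem exists_neg_or_eq_natCast (m : σ → ℤ) :
    (∃ i, m i < 0) ∨ ∃ d : σ →₀ ℕ, m = fun i => (d i : ℤ) := by
  by_cases! h : ∃ i, m i < 0
  · exact .inl h
  · exact .inr ⟨Finsupp.equivFunOnFinite.symm fun i => (m i).toNat,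
      funext fun i => (Int.toNat_of_nonneg (h i)).symm⟩

theorem intCoeff_monomial_mul (m : σ → ℤ) (d : σ →₀ ℕ) (p : MvPolynomial σ R) :
    intCoeff m (monomial d 1 * p) = intCoeff (m - fun i => (d i : ℤ)) p := by
  rcases exists_neg_or_eq_natCast (m - fun i => (d i : ℤ)) with ⟨i, hi⟩ | ⟨e, he⟩
  · rw [intCoeff_of_neg hi]
    rcases exists_neg_or_eq_natCast m with ⟨j, hj⟩ | ⟨m, rfl⟩
    · exact intCoeff_of_neg hj _
    · have hdm : ¬ d ≤ m := fun h => by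
        have := h i
        simp only [Pi.sub_apply] at hi
        omega
      rw [intCoeff_natCast, coeff_monomial_mul', if_neg hdm]
  · have hm : m = fun i => ((d + e) i : ℤ) := by
      rw [sub_eq_iff_eq_add'.mp he]
      ext i
      simp
    rw [he, hm, intCoeff_natCast, intCoeff_natCast, coeff_monomial_mul, one_mul]

theorem intCoeff_X_pow_mul [DecidableEq σ] (m : σ → ℤ) (i : σ) (k : ℕ) (p : MvPolynomial σ R) :
    intCoeff m (X i ^ k * p) = intCoeff (m - Pi.single i (k : ℤ)) p := by
  rw [X_pow_eq_monomial, intCoeff_monomial_mul]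
  congr 2
  ext j
  simp [Finsupp.single_apply, Pi.single_apply, eq_comm]

end IntCoeff

theorem intCoeff_prod_X_pow_mul {σ R : Type*} [Fintype σ] [CommSemiring R] (m : σ → ℤ)
    (d : σ → ℕ) (p : MvPolynomial σ R) :
    intCoeff m ((∏ i, X i ^ d i) * p) = intCoeff (m - fun i => (d i : ℤ)) p := by
  rw [prod_X_pow, intCoeff_monomial_mul]
  congr 2
  funext i
  rw [Pi.sub_apply, Pi.sub_apply, Finsupp.indicator_of_mem (mem_univ i)]

section IsolateVar

variable {n : ℕ} {R : Type*} [CommSemiring R]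

/-- A polynomial in `n + 1` variables, viewed as a univariate polynomial in the variable `k` over
the polynomials in the other `n` variables. -/
noncomputable def isolateVar (k : Fin (n + 1)) :
    MvPolynomial (Fin (n + 1)) R ≃ₐ[R] Polynomial (MvPolynomial (Fin n) R) :=
  (renameEquiv R (finSuccEquiv' k)).trans (optionEquivLeft R (Fin n))

@[simp]
theorem isolateVar_X_self (k : Fin (n + 1)) :
    isolateVar k (X k : MvPolynomial _ R) = Polynomial.X := by
  simp [isolateVar]

@[simp]
theorem isolateVar_X_succAbove (k : Fin (n + 1)) (j : Fin n) :
    isolateVar k (X (k.succAbove j) : MvPolynomial _ R) = Polynomial.C (X j) := by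
  simp [isolateVar]

theorem coeff_coeff_isolateVar (k : Fin (n + 1)) (d : Fin (n + 1) →₀ ℕ)
    (p : MvPolynomial (Fin (n + 1)) R) :
    coeff (Finsupp.equivFunOnFinite.symm (k.removeNth d)) ((isolateVar k p).coeff (d k)) =
      coeff d p := by
  rw [isolateVar, AlgEquiv.trans_apply, optionEquivLeft_coeff_coeff, renameEquiv_apply,
    ← coeff_rename_mapDomain _ (finSuccEquiv' k).injective]
  congr 1
  ext (_ | j) <;> simp [Finsupp.mapDomain_equiv_apply, Fin.removeNth]

theorem intCoeff_coeff_isolateVar {k : Fin (n + 1)} {m : Fin (n + 1) → ℤ} {e : ℕ} (he : m k = e)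
    (p : MvPolynomial (Fin (n + 1)) R) :
    intCoeff (k.removeNth m) ((isolateVar k p).coeff e) = intCoeff m p := by
  rcases exists_neg_or_eq_natCast m with ⟨i, hi⟩ | ⟨d, rfl⟩
  · obtain ⟨j, rfl⟩ := Fin.exists_succAbove_eq (x := i) (y := k) (by rintro rfl; omega)
    rw [intCoeff_of_neg (i := j) hi, intCoeff_of_neg hi]
  · obtain rfl : d k = e := Nat.cast_injective he
    rw [intCoeff_natCast, ← coeff_coeff_isolateVar k]
    exact intCoeff_natCast (Finsupp.equivFunOnFinite.symm (k.removeNth d)) _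

end IsolateVar

section LinearFactors

variable {ι R : Type*} [Fintype ι] [CommRing R] (x : ι → R) (a : ι → ℕ)

theorem coeff_zero_prod_C_sub_X_pow :
    (∏ i, (Polynomial.C (x i) - Polynomial.X) ^ a i).coeff 0 = ∏ i, x i ^ a i := by
  simp [Polynomial.coeff_zero_eq_eval_zero, Polynomial.eval_prod]

-- The truncation of `a j - 1` at `a j = 0` is harmless because of the factor `a j`.
theorem coeff_one_prod_C_sub_X_pow [DecidableEq ι] :
    (∏ i, (Polynomial.C (x i) - Polynomial.X) ^ a i).coeff 1 =
      -∑ j, (a j : R) * ∏ i, x i ^ (a - Pi.single j 1 : ι → ℕ) i := by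
  have h := Polynomial.coeff_derivative (∏ i, (Polynomial.C (x i) - Polynomial.X) ^ a i) 0
  rw [Nat.cast_zero, zero_add, zero_add, mul_one] at h
  rw [← h, Polynomial.coeff_zero_eq_eval_zero, Polynomial.derivative_prod_finset,
    Polynomial.eval_finsetSum, ← sum_neg_distrib]
  refine sum_congr rfl fun j _ => ?_
  rw [← mul_prod_erase univ _ (mem_univ j)]
  have hne : ∏ i ∈ univ.erase j, x i ^ (a - Pi.single j 1 : ι → ℕ) i =
      ∏ i ∈ univ.erase j, x i ^ a i :=
    prod_congr rfl fun i hi => by simp [ne_of_mem_erase hi]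
  rw [hne]
  simp only [Polynomial.derivative_pow, Polynomial.derivative_sub, Polynomial.derivative_C,
    Polynomial.derivative_X, Polynomial.eval_prod, Polynomial.eval_mul, Polynomial.eval_pow,
    Polynomial.eval_sub, Polynomial.eval_C, Polynomial.eval_X, Polynomial.eval_natCast,
    Polynomial.eval_zero, Polynomial.eval_one, map_natCast, sub_zero, Pi.sub_apply,
    Pi.single_eq_same]
  ring

end LinearFactors

theorem sum_pow_div_prod_sub_eq_one {ι K : Type*} [Fintype ι] [Nonempty ι] [DecidableEq ι]
    [Field K] {v : ι → K} (hv : Function.Injective v) :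
    ∑ j, v j ^ (Fintype.card ι - 1) / ∏ i ∈ univ.erase j, (v j - v i) = 1 := by
  have hdeg : (Polynomial.X ^ (Fintype.card ι - 1) : Polynomial K).degree < #(univ : Finset ι) := by
    rw [Polynomial.degree_X_pow, card_univ]
    exact_mod_cast Nat.sub_one_lt Fintype.card_ne_zero
  have h := Lagrange.coeff_eq_sum hv.injOn hdeg
  simpa [card_univ] using h.symm

@[to_additive]
theorem prod_univ_erase_succAbove {n : ℕ} {M : Type*} [CommMonoid M] (k : Fin (n + 1)) (j : Fin n)
    (f : Fin (n + 1) → M) :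
    ∏ i ∈ univ.erase (k.succAbove j), f i = f k * ∏ i ∈ univ.erase j, f (k.succAbove i) := by
  rw [Fin.univ_succAbove n k, erase_cons_of_ne _ (k.succAbove_ne j).symm, prod_cons,
    ← k.coe_succAboveEmb, ← map_erase, prod_map]

section DysonPoly

theorem dysonPoly_add (n : ℕ) (a b : Fin n → ℕ) :
    dysonPoly n (a + b) = dysonPoly n a * dysonPoly n b := by
  simp [dysonPoly, pow_add, prod_mul_distrib]

theorem dysonPoly_single_one (n : ℕ) (j : Fin n) :
    dysonPoly n (Pi.single j 1) = ∏ i ∈ univ.erase j, (X j - X i) := by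
  rw [dysonPoly, Fintype.prod_eq_single j fun i hi => by simp [hi]]
  simp

theorem dysonPoly_eq_mul_prod_sub {n : ℕ} {a : Fin n → ℕ} {j : Fin n} (ha : a j ≠ 0) :
    dysonPoly n a = dysonPoly n (a - Pi.single j 1) * ∏ i ∈ univ.erase j, (X j - X i) := by
  rw [← dysonPoly_single_one, ← dysonPoly_add, sub_single_one_add_single_one ha]

theorem dysonPoly_succ_eq_sum {n : ℕ} {a : Fin (n + 1) → ℕ} (ha : ∀ j, a j ≠ 0) :
    dysonPoly (n + 1) a = ∑ j : Fin (n + 1), X j ^ n * dysonPoly (n + 1) (a - Pi.single j 1) := by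
  let A := MvPolynomial (Fin (n + 1)) ℤ
  let φ := algebraMap A (FractionRing A)
  have hφ : Function.Injective φ := IsFractionRing.injective A (FractionRing A)
  have hv : Function.Injective fun j => φ (X j) := hφ.comp X_injective
  have hterm (j : Fin (n + 1)) :
      φ (dysonPoly (n + 1) a) * (φ (X j) ^ n / ∏ i ∈ univ.erase j, (φ (X j) - φ (X i))) =
        φ (X j ^ n * dysonPoly (n + 1) (a - Pi.single j 1)) := by
    have hne : ∏ i ∈ univ.erase j, (φ (X j) - φ (X i)) ≠ 0 :=
      prod_ne_zero_iff.mpr fun i hi => sub_ne_zero.mpr (hv.ne (ne_of_mem_erase hi).symm)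
    rw [dysonPoly_eq_mul_prod_sub (ha j)]
    simp only [map_mul, map_prod, map_sub, map_pow]
    rw [mul_assoc, mul_div_cancel₀ _ hne, mul_comm]
  have hlagrange := sum_pow_div_prod_sub_eq_one hv
  rw [Fintype.card_fin, Nat.add_sub_cancel] at hlagrange
  apply hφ
  rw [map_sum, ← mul_one (φ (dysonPoly (n + 1) a)), ← hlagrange, mul_sum]
  exact sum_congr rfl fun j _ => hterm j

theorem isolateVar_dysonPoly {n : ℕ} {a : Fin (n + 1) → ℕ} {k : Fin (n + 1)} (ha : a k = 0) :
    isolateVar k (dysonPoly (n + 1) a) =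
      (∏ j, (Polynomial.C (X j) - Polynomial.X) ^ k.removeNth a j) *
        Polynomial.C (dysonPoly n (k.removeNth a)) := by
  simp [dysonPoly, Fin.prod_univ_succAbove _ k, prod_univ_erase_succAbove, ha, prod_mul_distrib,
    Fin.removeNth]

end DysonPoly

theorem dysonCT_eq_intCoeff (n : ℕ) (a : Fin n → ℕ) (b : Fin n → ℤ) :
    dysonCT n a b = intCoeff (fun j => ((n : ℤ) - 1) * a j + b j) (dysonPoly n a) := by
  simp only [dysonCT, intCoeff, Pi.le_def, Pi.zero_apply]
  split_ifs <;> rfl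

theorem dysonCT_succ_eq_sum {n : ℕ} {a : Fin (n + 1) → ℕ} (ha : ∀ j, a j ≠ 0)
    (b : Fin (n + 1) → ℤ) :
    dysonCT (n + 1) a b = ∑ j, dysonCT (n + 1) (a - Pi.single j 1) b := by
  simp only [dysonCT_eq_intCoeff]
  rw [dysonPoly_succ_eq_sum ha, map_sum]
  refine sum_congr rfl fun j _ => ?_
  rw [intCoeff_X_pow_mul]
  congr 2
  ext i
  rw [natCast_sub_single_one_apply (ha j)]
  rcases eq_or_ne i j with rfl | hij
  · simp only [Nat.cast_add, Nat.cast_one, Pi.sub_apply, Pi.single_eq_same]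
    ring
  · simp [hij]

section ZeroExponent

variable {n : ℕ} {a : Fin (n + 1) → ℕ} {b : Fin (n + 1) → ℤ} {k : Fin (n + 1)}

theorem dysonCT_eq_zero_of_neg (ha : a k = 0) (hb : b k < 0) : dysonCT (n + 1) a b = 0 := by
  rw [dysonCT_eq_intCoeff, intCoeff_of_neg (i := k) (by simpa [ha])]

theorem dysonCT_eq_removeNth (ha : a k = 0) (hb : b k = 0) :
    dysonCT (n + 1) a b = dysonCT n (k.removeNth a) (k.removeNth b) := by
  rw [dysonCT_eq_intCoeff, ← intCoeff_coeff_isolateVar (k := k) (e := 0) (by simp [ha, hb]),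
    isolateVar_dysonPoly ha, Polynomial.coeff_mul_C, coeff_zero_prod_C_sub_X_pow,
    intCoeff_prod_X_pow_mul, dysonCT_eq_intCoeff]
  congr 2
  ext j
  simp only [Pi.sub_apply, Fin.removeNth_apply, Nat.cast_add, Nat.cast_one]
  ring

theorem dysonCT_eq_neg_sum_removeNth (ha : a k = 0) (hb : b k = 1) :
    dysonCT (n + 1) a b = -∑ j, (k.removeNth a j : ℤ) *
      dysonCT n (k.removeNth a) (k.removeNth b + Pi.single j 1) := by
  rw [dysonCT_eq_intCoeff, ← intCoeff_coeff_isolateVar (k := k) (e := 1) (by simp [ha, hb]),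
    isolateVar_dysonPoly ha, Polynomial.coeff_mul_C, coeff_one_prod_C_sub_X_pow, neg_mul, map_neg,
    sum_mul, map_sum]
  congr 1
  refine sum_congr rfl fun j _ => ?_
  rcases eq_or_ne (k.removeNth a j) 0 with hj | hj
  · simp [hj]
  rw [mul_assoc, ← nsmul_eq_mul, map_nsmul, nsmul_eq_mul, intCoeff_prod_X_pow_mul,
    dysonCT_eq_intCoeff]
  congr 3
  ext i
  rw [Pi.sub_apply, natCast_sub_single_one_apply hj]
  simp only [Fin.removeNth_apply, Pi.add_apply]
  push_cast
  ring

end ZeroExponent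

section FactorialSums

variable {ι : Type*} [Fintype ι] [DecidableEq ι] {a : ι → ℕ} {j : ι}

theorem sum_sub_single_one_add_one (ha : a j ≠ 0) :
    ∑ i, (a - Pi.single j 1 : ι → ℕ) i + 1 = ∑ i, a i := by
  conv_rhs => rw [← sub_single_one_add_single_one ha]
  simp only [Pi.add_apply, sum_add_distrib, Fintype.sum_pi_single']

theorem prod_factorial_eq_mul_prod_factorial_sub_single_one (ha : a j ≠ 0) :
    ∏ i, (a i).factorial = a j * ∏ i, ((a - Pi.single j 1 : ι → ℕ) i).factorial := by
  rw [← mul_prod_erase univ _ (mem_univ j), ← mul_prod_erase univ _ (mem_univ j), ← mul_assoc]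
  congr 1
  · simp [Nat.mul_factorial_pred ha]
  · exact prod_congr rfl fun i hi => by simp [ne_of_mem_erase hi]

end FactorialSums

theorem natTuple_induction {motive : ∀ n, (Fin n → ℕ) → Prop} (zero : ∀ a, motive 0 a)
    (removeNth : ∀ n a k, a k = 0 → motive n (k.removeNth a) → motive (n + 1) a)
    (sub_single : ∀ n a, (∀ j, a j ≠ 0) → (∀ j, motive (n + 1) (a - Pi.single j 1)) →
      motive (n + 1) a) (n : ℕ) (a : Fin n → ℕ) : motive n a := by
  induction n with
  | zero => exact zero a
  | succ n ihn =>
    induction hs : ∑ i, a i generalizing a with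
    | zero => exact removeNth n a 0 (by simp_all) (ihn _)
    | succ s ihs =>
      by_cases! ha : ∃ k, a k = 0
      · obtain ⟨k, hk⟩ := ha
        exact removeNth n a k hk (ihn _)
      · exact sub_single n a ha fun j => ihs _ <| by
          have := sum_sub_single_one_add_one (ha j)
          omega

theorem prod_factorial_mul_dysonCT_zero (n : ℕ) (a : Fin n → ℕ) :
    (∏ i, (a i).factorial : ℤ) * dysonCT n a 0 = (∑ i, a i).factorial := by
  induction n, a using natTuple_induction with
  | zero a => simp [dysonCT, dysonPoly, coeff_one, eq_iff_true_of_subsingleton]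
  | removeNth n a k hk ih =>
    have hb : k.removeNth (0 : Fin (n + 1) → ℤ) = 0 := rfl
    rw [dysonCT_eq_removeNth hk rfl, Fin.prod_univ_succAbove _ k, Fin.sum_univ_succAbove _ k, hk,
      hb]
    simpa [Fin.removeNth] using ih
  | sub_single n a ha ih =>
    obtain ⟨s, hs⟩ : ∃ s, ∑ i, a i = s + 1 := ⟨_, (sum_sub_single_one_add_one (ha 0)).symm⟩
    have hterm (j : Fin (n + 1)) : (∏ i, (a i).factorial : ℤ) *
        dysonCT (n + 1) (a - Pi.single j 1) 0 = a j * s.factorial := by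
      have hsj := sum_sub_single_one_add_one (ha j)
      have hp := prod_factorial_eq_mul_prod_factorial_sub_single_one (ha j)
      rw [hs, Nat.add_right_cancel_iff] at hsj
      zify at hp
      rw [hp, mul_assoc, ih, hsj]
    rw [dysonCT_succ_eq_sum ha, mul_sum, sum_congr rfl fun j _ => hterm j, ← sum_mul, hs,
      Nat.factorial_succ, ← hs]
    push_cast
    rfl

/-- The closed form for the constant term `c_n(a; e_q - e_p)`, in which one unit of degree is
transferred from `x_p` to `x_q`, as a predicate on `a` in order to propagate it along the
recursions for `dysonCT`. Denominators are cleared to stay in `ℤ`. -/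
def HasTransferFormula {n : ℕ} (a : Fin n → ℕ) (p q : Fin n) : Prop :=
  (1 + ∑ i ∈ univ.erase p, (a i : ℤ)) * (∏ i, (a i).factorial : ℤ) *
      dysonCT n a (Pi.single q 1 - Pi.single p 1) =
    -(a p : ℤ) * (∑ i, a i).factorial

theorem HasTransferFormula.of_removeNth {n : ℕ} {a : Fin (n + 1) → ℕ} {k : Fin (n + 1)}
    (hk : a k = 0) {p q : Fin n} (h : HasTransferFormula (k.removeNth a) p q) :
    HasTransferFormula a (k.succAbove p) (k.succAbove q) := by
  have hb : k.removeNth (Pi.single (k.succAbove q) 1 - Pi.single (k.succAbove p) 1 :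
      Fin (n + 1) → ℤ) = Pi.single q 1 - Pi.single p 1 := by
    ext i
    simp [Fin.removeNth, Pi.single_apply]
  rw [HasTransferFormula, dysonCT_eq_removeNth hk (by simp), hb, sum_univ_erase_succAbove,
    Fin.prod_univ_succAbove _ k, Fin.sum_univ_succAbove _ k, hk]
  simpa [HasTransferFormula, Fin.removeNth] using h

theorem HasTransferFormula.of_removeNth_target {n : ℕ} {a : Fin (n + 1) → ℕ} {k : Fin (n + 1)}
    (hk : a k = 0) {p : Fin n}
    (h : ∀ q, p ≠ q → HasTransferFormula (k.removeNth a) p q) :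
    HasTransferFormula a (k.succAbove p) k := by
  have hb : k.removeNth (Pi.single k 1 - Pi.single (k.succAbove p) 1 : Fin (n + 1) → ℤ) =
      -Pi.single p 1 := by
    ext i
    simp [Fin.removeNth, Pi.single_apply]
  rw [HasTransferFormula, dysonCT_eq_neg_sum_removeNth hk (by simp), hb, sum_univ_erase_succAbove,
    Fin.prod_univ_succAbove _ k, Fin.sum_univ_succAbove _ k, hk,
    ← add_sum_erase univ _ (mem_univ p), neg_add_cancel]
  have hdyson := prod_factorial_mul_dysonCT_zero n (k.removeNth a)
  have hsum : (1 + ∑ i ∈ univ.erase p, (k.removeNth a i : ℤ)) *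
        (∏ i, (k.removeNth a i).factorial : ℤ) * ∑ j ∈ univ.erase p, (k.removeNth a j : ℤ) *
        dysonCT n (k.removeNth a) (-Pi.single p 1 + Pi.single j 1) =
      (∑ j ∈ univ.erase p, (k.removeNth a j : ℤ)) *
        (-(k.removeNth a p : ℤ) * (∑ i, k.removeNth a i).factorial) := by
    rw [mul_sum, sum_mul]
    refine sum_congr rfl fun j hj => ?_
    rw [neg_add_eq_sub, ← h j (ne_of_mem_erase hj).symm]
    ring
  simp only [Fin.removeNth_apply, Nat.cast_zero, zero_add, Nat.factorial_zero, Nat.cast_one,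
    one_mul] at hdyson hsum ⊢
  linear_combination
    -((1 + ∑ i ∈ univ.erase p, (a (k.succAbove i) : ℤ)) * a (k.succAbove p)) * hdyson - hsum

theorem HasTransferFormula.mul_dysonCT_sub_single {n : ℕ} {a : Fin n → ℕ} {p q j : Fin n}
    (ha : a j ≠ 0) (h : HasTransferFormula (a - Pi.single j 1) p q) :
    (∑ i ∈ univ.erase p, (a i : ℤ) + (Pi.single j 1 : Fin n → ℤ) p) *
        (∏ i, (a i).factorial : ℤ) *
          dysonCT n (a - Pi.single j 1) (Pi.single q 1 - Pi.single p 1) =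
      -(a j : ℤ) * (a p - (Pi.single j 1 : Fin n → ℤ) p) *
        (∑ i, (a - Pi.single j 1 : Fin n → ℕ) i).factorial := by
  have hprod := prod_factorial_eq_mul_prod_factorial_sub_single_one ha
  zify at hprod
  have hweight : 1 + ∑ i ∈ univ.erase p, (((a - Pi.single j 1 : Fin n → ℕ) i : ℕ) : ℤ) =
      ∑ i ∈ univ.erase p, (a i : ℤ) + (Pi.single j 1 : Fin n → ℤ) p := by
    simp only [sum_erase_eq_sub (mem_univ p), natCast_sub_single_one_apply ha, sum_sub_distrib,
      Fintype.sum_pi_single']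
    ring
  rw [HasTransferFormula, hweight, natCast_sub_single_one_apply ha] at h
  rw [hprod]
  linear_combination (a j : ℤ) * h

theorem HasTransferFormula.of_sub_single {n : ℕ} {a : Fin (n + 1) → ℕ} (ha : ∀ j, a j ≠ 0)
    {p q : Fin (n + 1)} (hpq : p ≠ q) (h : ∀ j, HasTransferFormula (a - Pi.single j 1) p q) :
    HasTransferFormula a p q := by
  obtain ⟨s, hs⟩ : ∃ s, ∑ i, a i = s + 1 := ⟨_, (sum_sub_single_one_add_one (ha 0)).symm⟩
  set w : ℤ := ∑ i ∈ univ.erase p, (a i : ℤ) with hw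
  have hsw : (s + 1 : ℤ) = a p + w := by
    rw [hw, add_sum_erase univ (fun i => (a i : ℤ)) (mem_univ p)]
    exact_mod_cast hs.symm
  have hw0 : w ≠ 0 := by
    have hq : (0 : ℤ) < a q := by exact_mod_cast Nat.pos_of_ne_zero (ha q)
    exact (sum_pos' (fun i _ => Int.natCast_nonneg _) ⟨q, by simp [hpq.symm], hq⟩).ne'
  have hterm (j : Fin (n + 1)) := (h j).mul_dysonCT_sub_single (ha j)
  have hsj (j : Fin (n + 1)) : ∑ i, (a - Pi.single j 1 : Fin (n + 1) → ℕ) i = s :=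
    Nat.add_right_cancel ((sum_sub_single_one_add_one (ha j)).trans hs)
  simp only [hsj, ← hw] at hterm
  have hself := hterm p
  rw [Pi.single_eq_same] at hself
  have hothers : (∏ i, (a i).factorial : ℤ) * ∑ j ∈ univ.erase p,
        dysonCT (n + 1) (a - Pi.single j 1) (Pi.single q 1 - Pi.single p 1) =
      -(a p : ℤ) * s.factorial := by
    refine mul_left_cancel₀ hw0 ?_
    rw [mul_sum, mul_sum, hw, sum_mul]
    refine sum_congr rfl fun j hj => ?_
    have hj' := hterm j
    rw [Pi.single_eq_of_ne (ne_of_mem_erase hj).symm] at hj'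
    linear_combination hj'
  rw [HasTransferFormula, dysonCT_succ_eq_sum ha, ← add_sum_erase univ _ (mem_univ p), hs,
    Nat.factorial_succ, ← hw]
  push_cast
  linear_combination hself + (1 + w) * hothers + a p * s.factorial * hsw

theorem dysonCT_three_neg_one_zero_one_general {n : ℕ} (a : Fin n → ℕ) {p q : Fin n}
    (hpq : p ≠ q) :
    (1 + ∑ i ∈ univ.erase p, (a i : ℤ)) * (∏ i, (a i).factorial : ℤ) *
        dysonCT n a (Pi.single q 1 - Pi.single p 1) =
      -(a p : ℤ) * (∑ i, a i).factorial := by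
  change HasTransferFormula a p q
  induction n, a using natTuple_induction with
  | zero => exact p.elim0
  | removeNth n a k hk ih =>
    rcases eq_or_ne p k with rfl | hp
    · simp [HasTransferFormula, hk, dysonCT_eq_zero_of_neg hk (b := Pi.single q 1 - Pi.single p 1)
        (by simp [hpq])]
    obtain ⟨p, rfl⟩ := Fin.exists_succAbove_eq hp
    rcases eq_or_ne q k with rfl | hq
    · exact .of_removeNth_target hk fun _ => ih
    obtain ⟨q, rfl⟩ := Fin.exists_succAbove_eq hq
    exact .of_removeNth hk (ih (by simpa using hpq))
  | sub_single n a ha ih => exact .of_sub_single ha hpq fun j => ih j hpq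

/-- Closed form for `c_3(⟨a_1, a_2, a_3⟩; ⟨-1, 0, 1⟩)`:
`(1+a_2+a_3) a_1! a_2! a_3! · c_3 = -a_1 (a_1+a_2+a_3)!`. -/
theorem dysonCT_three_neg_one_zero_one (a₁ a₂ a₃ : ℕ) :
    (1 + (a₂ : ℤ) + a₃) * (a₁.factorial : ℤ) * (a₂.factorial : ℤ) * (a₃.factorial : ℤ) *
        dysonCT 3 ![a₁, a₂, a₃] ![-1, 0, 1]
      = -(a₁ : ℤ) * ((a₁ + a₂ + a₃).factorial : ℤ) := by
  have hb : (![-1, 0, 1] : Fin 3 → ℤ) = Pi.single 2 1 - Pi.single 0 1 := by decide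
  have he : (univ.erase 0 : Finset (Fin 3)) = {1, 2} := by decide
  have h := dysonCT_three_neg_one_zero_one_general ![a₁, a₂, a₃] (p := 0) (q := 2) (by decide)
  simpa [hb, he, Fin.prod_univ_three, Fin.sum_univ_three, ← add_assoc, ← mul_assoc] using h
end

section
/- Fix a positive integer n ≥ 2 and integers b_1, …, b_n. If f is any function from n-tuples of nonnegative integers to the integers such that (i) f(a) = Σ_{i=1}^n f(⟨a_1, …, a_{i−1}, a_i − 1, a_{i+1}, …, a_n⟩) whenever all a_i ≥ 1, and (ii) f(a) = c_n(a; b) whenever at least one a_k = 0, then f(a) = c_n(a; b) for all n-tuples a of nonnegative integers. -/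
/-!
For distinct nodes `x_j`, comparing top coefficients in the Lagrange interpolation of `X ^ (n - 1)`
gives `1 = ∑ j, x_j ^ (n - 1) / ∏ i ≠ j, (x_j - x_i)`. Multiplied by the product of all
`(x_j - x_i) ^ a_j`, the `j`-th denominator cancels and lowers `a_j` by one, so taking coefficients
shows that the constant terms themselves satisfy Good's recursion. Every step of the recursion goes
strictly down in the product order, so a solution is determined by its values on the boundary.
-/

open Finset MvPolynomial

section GoodRecursion

variable {ι M : Type*} [Fintype ι] [DecidableEq ι] [AddCommMonoid M]

/-- Good's recursion for a function of finitely many natural numbers: away from the boundary, where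
some argument vanishes, its value is the sum of the values obtained by lowering one argument by
one. -/
def GoodRecursion (f : (ι → ℕ) → M) : Prop :=
  ∀ a : ι → ℕ, (∀ i, 1 ≤ a i) → f a = ∑ i, f (Function.update a i (a i - 1))

theorem GoodRecursion.ext {f g : (ι → ℕ) → M} (hf : GoodRecursion f) (hg : GoodRecursion g)
    (hfg : ∀ a : ι → ℕ, (∃ i, a i = 0) → f a = g a) : f = g := by
  funext a
  induction a using WellFoundedLT.induction with
  | _ a ih =>
    by_cases hzero : ∃ i, a i = 0
    · exact hfg a hzero
    · have hpos : ∀ i, 1 ≤ a i := fun i ↦ Nat.one_le_iff_ne_zero.mpr fun hi ↦ hzero ⟨i, hi⟩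
      rw [hf a hpos, hg a hpos]
      exact sum_congr rfl fun i _ ↦
        ih _ (update_lt_self_iff.mpr (Nat.sub_one_lt_of_lt (hpos i)))

end GoodRecursion

section NodeProducts

variable {ι : Type*} [DecidableEq ι]

theorem sum_pow_div_prod_erase_sub_eq_one {K : Type*} [Field K] {s : Finset ι} {v : ι → K}
    (hs : s.Nonempty) (hv : Set.InjOn v s) :
    ∑ i ∈ s, v i ^ (#s - 1) / ∏ j ∈ s.erase i, (v i - v j) = 1 := by
  have hdeg : (Polynomial.X ^ (#s - 1) : Polynomial K).degree < #s := by
    rw [Polynomial.degree_X_pow]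
    exact_mod_cast Nat.sub_one_lt hs.card_ne_zero
  simpa using (Lagrange.coeff_eq_sum hv hdeg).symm

theorem prod_prod_erase_sub_eq_sum {R : Type*} [CommRing R] [IsDomain R] {s : Finset ι}
    {v : ι → R} (hs : s.Nonempty) (hv : Set.InjOn v s) :
    ∏ i ∈ s, ∏ j ∈ s.erase i, (v i - v j) =
      ∑ i ∈ s, v i ^ (#s - 1) * ∏ k ∈ s.erase i, ∏ j ∈ s.erase k, (v k - v j) := by
  let φ := algebraMap R (FractionRing R)
  have hφ : Function.Injective φ := IsFractionRing.injective R (FractionRing R)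
  let D (i : ι) : FractionRing R := ∏ j ∈ s.erase i, (φ (v i) - φ (v j))
  have hφv : Set.InjOn (φ ∘ v) s := hφ.comp_injOn hv
  have hsum : ∑ i ∈ s, φ (v i) ^ (#s - 1) / D i = 1 := sum_pow_div_prod_erase_sub_eq_one hs hφv
  have hD : ∀ i ∈ s, D i ≠ 0 := fun i hi ↦ prod_ne_zero_iff.mpr fun j hj ↦
    sub_ne_zero.mpr fun hij ↦ ne_of_mem_erase hj (hφv hi (mem_of_mem_erase hj) hij).symm
  apply hφ
  simp only [map_prod, map_sum, map_mul, map_pow, map_sub]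
  calc ∏ i ∈ s, D i = (∑ i ∈ s, φ (v i) ^ (#s - 1) / D i) * ∏ i ∈ s, D i := by
        rw [hsum, one_mul]
    _ = ∑ i ∈ s, φ (v i) ^ (#s - 1) * ∏ k ∈ s.erase i, D k := by
        rw [sum_mul]
        refine sum_congr rfl fun i hi ↦ ?_
        rw [← mul_prod_erase s D hi, ← mul_assoc, div_mul_cancel₀ _ (hD i hi)]

end NodeProducts

section Powers

variable {ι R : Type*} [Fintype ι] [DecidableEq ι] [CommSemiring R]

theorem prod_pow_update_sub_one (D : ι → R) {a : ι → ℕ} (ha : ∀ i, 1 ≤ a i) (i : ι) :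
    ∏ k, D k ^ Function.update a i (a i - 1) k =
      (∏ k, D k ^ (a k - 1)) * ∏ k ∈ univ.erase i, D k := by
  have herase : ∏ k ∈ univ.erase i, D k ^ Function.update a i (a i - 1) k =
      (∏ k ∈ univ.erase i, D k ^ (a k - 1)) * ∏ k ∈ univ.erase i, D k := by
    rw [← prod_mul_distrib]
    refine prod_congr rfl fun k hk ↦ ?_
    rw [Function.update_of_ne (ne_of_mem_erase hk), pow_sub_one_mul (Nat.ne_of_gt (ha k))]
  rw [← mul_prod_erase univ _ (mem_univ i), herase, Function.update_self, ← mul_assoc,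
    mul_prod_erase univ (fun k ↦ D k ^ (a k - 1)) (mem_univ i)]

theorem prod_pow_eq_sum_mul_prod_pow_update {D w : ι → R}
    (h : ∏ i, D i = ∑ i, w i * ∏ k ∈ univ.erase i, D k) {a : ι → ℕ} (ha : ∀ i, 1 ≤ a i) :
    ∏ i, D i ^ a i = ∑ i, w i * ∏ k, D k ^ Function.update a i (a i - 1) k := by
  calc ∏ i, D i ^ a i = (∏ i, D i ^ (a i - 1)) * ∏ i, D i := by
        rw [← prod_mul_distrib]
        exact prod_congr rfl fun i _ ↦ (pow_sub_one_mul (Nat.ne_of_gt (ha i)) _).symm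
    _ = ∑ i, w i * ((∏ k, D k ^ (a k - 1)) * ∏ k ∈ univ.erase i, D k) := by
        rw [h, mul_sum]
        exact sum_congr rfl fun i _ ↦ mul_left_comm _ _ _
    _ = ∑ i, w i * ∏ k, D k ^ Function.update a i (a i - 1) k := by
        simp only [prod_pow_update_sub_one D ha]

end Powers

section LaurentCoeff

variable {σ R : Type*} [Finite σ] [CommSemiring R]

open Classical in
/-- The coefficient of a polynomial at an exponent with integer entries, that is, its coefficient
when it is regarded as a Laurent polynomial: it vanishes as soon as some entry is negative. -/
noncomputable def laurentCoeff (e : σ → ℤ) : MvPolynomial σ R →ₗ[R] R :=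
  if ∀ j, 0 ≤ e j then lcoeff R (Finsupp.equivFunOnFinite.symm fun j ↦ (e j).toNat) else 0

theorem laurentCoeff_apply (e : σ → ℤ) [Decidable (∀ j, 0 ≤ e j)] (p : MvPolynomial σ R) :
    laurentCoeff e p =
      if ∀ j, 0 ≤ e j then coeff (Finsupp.equivFunOnFinite.symm fun j ↦ (e j).toNat) p else 0 := by
  unfold laurentCoeff
  split_ifs <;> rfl

theorem laurentCoeff_monomial_mul (e : σ → ℤ) (m : σ →₀ ℕ) (r : R) (p : MvPolynomial σ R) :
    laurentCoeff e (monomial m r * p) = r * laurentCoeff (fun j ↦ e j - m j) p := by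
  classical
  simp only [laurentCoeff_apply, sub_nonneg]
  by_cases hm : ∀ j, (m j : ℤ) ≤ e j
  · have he : ∀ j, 0 ≤ e j := fun j ↦ (Int.natCast_nonneg _).trans (hm j)
    have hadd : (Finsupp.equivFunOnFinite.symm fun j ↦ (e j).toNat) =
        m + Finsupp.equivFunOnFinite.symm fun j ↦ (e j - m j).toNat := by
      ext j
      simp only [Finsupp.add_apply, Finsupp.equivFunOnFinite_symm_apply_apply]
      have := hm j
      lia
    rw [if_pos he, if_pos hm, hadd, coeff_monomial_mul]
  · rw [if_neg hm, mul_zero, ite_eq_right_iff]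
    intro he
    rw [coeff_monomial_mul', if_neg]
    exact fun hle ↦ hm fun j ↦ Int.le_toNat (he j) |>.mp (hle j)

end LaurentCoeff

theorem dysonCT_eq_laurentCoeff (n : ℕ) (a : Fin n → ℕ) (b : Fin n → ℤ) :
    dysonCT n a b = laurentCoeff (fun j ↦ ((n : ℤ) - 1) * a j + b j) (dysonPoly n a) := by
  rw [dysonCT, laurentCoeff_apply]

theorem dysonPoly_eq_sum_update {n : ℕ} (hn : n ≠ 0) {a : Fin n → ℕ} (ha : ∀ i, 1 ≤ a i) :
    dysonPoly n a =
      ∑ j, monomial (Finsupp.single j (n - 1)) 1 *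
        dysonPoly n (Function.update a j (a j - 1)) := by
  have : NeZero n := ⟨hn⟩
  have hX : Set.InjOn (X : Fin n → MvPolynomial (Fin n) ℤ) (univ : Finset (Fin n)) :=
    X_injective.injOn
  simp only [dysonPoly, prod_pow, ← X_pow_eq_monomial]
  refine prod_pow_eq_sum_mul_prod_pow_update ?_ ha
  simpa only [card_fin] using prod_prod_erase_sub_eq_sum univ_nonempty hX

theorem dyson_exponent_sub_single {n : ℕ} (hn : n ≠ 0) (b : Fin n → ℤ) {a : Fin n → ℕ}
    {j : Fin n} (hj : 1 ≤ a j) (k : Fin n) :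
    ((n : ℤ) - 1) * a k + b k - Finsupp.single j (n - 1) k =
      ((n : ℤ) - 1) * Function.update a j (a j - 1) k + b k := by
  obtain rfl | hkj := eq_or_ne k j
  · rw [Finsupp.single_eq_same, Function.update_self]
    push_cast [hj, Nat.one_le_iff_ne_zero.mpr hn]
    ring
  · rw [Finsupp.single_eq_of_ne hkj, Function.update_of_ne hkj, Nat.cast_zero, sub_zero]

theorem goodRecursion_dysonCT {n : ℕ} (hn : n ≠ 0) (b : Fin n → ℤ) :
    GoodRecursion fun a ↦ dysonCT n a b := by
  intro a ha
  simp only [dysonCT_eq_laurentCoeff]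
  rw [dysonPoly_eq_sum_update hn ha, map_sum]
  refine sum_congr rfl fun j _ ↦ ?_
  simp only [laurentCoeff_monomial_mul, one_mul, dyson_exponent_sub_single hn b (ha j)]

/-- Uniqueness: any `f` satisfying Good's recursion at strictly positive arguments,
and agreeing with `c_n(·; b)` whenever some component vanishes, agrees with
`c_n(·; b)` everywhere. -/
theorem dysonCT_unique (n : ℕ) (hn : 2 ≤ n) (b : Fin n → ℤ)
    (f : (Fin n → ℕ) → ℤ)
    (hrec : ∀ a : Fin n → ℕ, (∀ i, 1 ≤ a i) →
      f a = ∑ i : Fin n, f (Function.update a i (a i - 1)))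
    (hbdry : ∀ a : Fin n → ℕ, (∃ k, a k = 0) → f a = dysonCT n a b) :
    ∀ a : Fin n → ℕ, f a = dysonCT n a b := by
  have hn0 : n ≠ 0 := by lia
  have hf : GoodRecursion f := hrec
  exact congrFun (hf.ext (goodRecursion_dysonCT hn0 b) hbdry)
end
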